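/- Let K be a finite extension of ℚ(t₁,…,tₙ) with ring of integers O_K (the integral closure of ℤ[t₁,…,tₙ] in K), and suppose K = ℚ(t₁,…,tₙ)(μ) and O_K = ℤ[t₁,…,tₙ][μ] for some μ. If Spec(O_K) → Spec(ℤ[t₁,…,tₙ]) is unramified (for every prime P of O_K over p of ℤ[t₁,…,tₙ], P = p·O_K locally and the residue extension is finite separable), then μ ∈ ℤ[t₁,…,tₙ] and hence K = ℚ(t₁,…,tₙ). -/

import Mathlib

/-!
If `f` is the minimal polynomial of an integral `μ` over an integrally closed domain `R`, then
`R[μ] ≅ R[X]/(f)`, and unramifiedness says that `f` and `f'` generate the unit ideal.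
This passes to the specialisation of `f` along any `R → ℤ`. Since `ℚ` has no unramified extension,
the specialised polynomial splits over `ℤ`; its roots are distinct modulo `2`, so its degree is at
most `2`. In degree `2` the discriminant of `f` is a unit of `R`. When the units are `±1`, being a
square modulo `4` forces the discriminant to be `1`, and then the quadratic formula gives
`2μ ∈ R`, contradicting the degree.
-/

section

open Polynomial Algebra

section Separable

variable {R : Type*} [CommRing R] {f : R[X]}

theorem subsingleton_of_formallyUnramified_adjoinRoot {Q : Type*} [CommRing Q] [Algebra R Q]
    [FormallyUnramified R (AdjoinRoot f)] {x : Q} (hf : aeval x f = 0)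
    (hf' : aeval x (derivative f) = 0) : Subsingleton Q := by
  -- `f` and `f'` both vanish at `x`, so the tangent vector `x + ε` is also a root of `f`.
  let ι : Q →ₐ[R] DualNumber Q := TrivSqZeroExt.inlAlgHom R Q Q
  have hroot : aeval (ι x) f = 0 := by rw [aeval_algHom_apply, hf, map_zero]
  have hroot_eps : aeval (ι x + DualNumber.eps) f = 0 := by
    rw [aeval_add_of_sq_eq_zero _ _ _ DualNumber.eps_pow_two, hroot, aeval_algHom_apply, hf',
      map_zero, zero_mul, add_zero]
  have exists_lift {y : DualNumber Q} (hy : aeval y f = 0) :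
      ∃ g : AdjoinRoot f →ₐ[R] DualNumber Q, g (AdjoinRoot.root f) = y :=
    ⟨AdjoinRoot.liftAlgHom f (ofId R _) y hy, AdjoinRoot.liftAlgHom_root ..⟩
  obtain ⟨g, hg⟩ := exists_lift hroot
  obtain ⟨g_eps, hg_eps⟩ := exists_lift hroot_eps
  have hlift : g = g_eps := by
    refine FormallyUnramified.lift_unique' (TrivSqZeroExt.fstHom R Q Q)
      ⟨2, TrivSqZeroExt.kerIdeal_sq Q Q⟩ g g_eps (AdjoinRoot.algHom_ext ?_)
    simp [hg, hg_eps]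
  have heps : (DualNumber.eps : DualNumber Q) = 0 := by
    rwa [hlift, hg_eps, add_eq_left] at hg
  exact subsingleton_of_zero_eq_one (by simpa using congrArg TrivSqZeroExt.snd heps.symm)

theorem separable_of_formallyUnramified_adjoinRoot [FormallyUnramified R (AdjoinRoot f)] :
    f.Separable := by
  let I : Ideal R[X] := Ideal.span {f, derivative f}
  have haeval {p : R[X]} (hp : p ∈ I) : aeval (Ideal.Quotient.mkₐ R I X) p = 0 := by
    rw [aeval_algHom_apply, aeval_X_left_apply]
    exact Ideal.Quotient.eq_zero_iff_mem.mpr hp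
  have hsub : Subsingleton (R[X] ⧸ I) := subsingleton_of_formallyUnramified_adjoinRoot (f := f)
    (haeval (Ideal.subset_span (by simp))) (haeval (Ideal.subset_span (by simp)))
  exact Ideal.mem_span_pair.mp
    ((Ideal.eq_top_iff_one I).mp (Ideal.Quotient.subsingleton_iff.mp hsub))

theorem isUnit_aeval_derivative_of_separable {S : Type*} [CommRing S] [Algebra R S] {x : S}
    (hf : f.Separable) (hx : aeval x f = 0) : IsUnit (aeval x (derivative f)) := by
  have hcop : IsCoprime (aeval x f) (aeval x (derivative f)) :=
    IsCoprime.map hf (aeval x : R[X] →ₐ[R] S).toRingHom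
  rwa [hx, isCoprime_zero_left] at hcop

theorem formallyUnramified_of_isUnit_aeval_derivative {S : Type*} [CommRing S] [Algebra R S]
    {x : S} (hgen : adjoin R {x} = ⊤) (hx : aeval x f = 0)
    (hunit : IsUnit (aeval x (derivative f))) : FormallyUnramified R S := by
  have hDx : KaehlerDifferential.D R S x = 0 := by
    rw [← hunit.smul_eq_zero, ← Derivation.map_aeval, hx, map_zero]
  have hD : KaehlerDifferential.D R S = 0 :=
    Derivation.ext_of_adjoin_eq_top {x} hgen (by simpa using hDx)
  refine ⟨?_⟩
  rw [← Submodule.subsingleton_iff S, ← subsingleton_iff_bot_eq_top,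
    ← KaehlerDifferential.span_range_derivation, hD]
  simp

theorem formallyUnramified_adjoin_of_separable {S : Type*} [CommRing S] [Algebra R S] {x : S}
    (hf : f.Separable) (hx : aeval x f = 0) : FormallyUnramified R (adjoin R {x}) := by
  let y : adjoin R {x} := ⟨x, self_mem_adjoin_singleton R x⟩
  have hy : aeval y f = 0 := Subtype.ext ((aeval_subalgebra_coe f _ y).trans hx)
  have hgen : adjoin R {y} = ⊤ := by
    have hset : {y} = ((↑) ⁻¹' {x} : Set (adjoin R {x})) :=
      Set.ext fun z ↦ by simp [y, Subtype.ext_iff]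
    rw [hset, adjoin_adjoin_coe_preimage]
  exact formallyUnramified_of_isUnit_aeval_derivative hgen hy
    (isUnit_aeval_derivative_of_separable hf hy)

theorem isUnit_discr_of_separable (hmonic : f.Monic) (hf : f.Separable) : IsUnit f.discr := by
  nontriviality R
  obtain hdeg | hdeg := f.natDegree.eq_zero_or_pos
  · rw [hmonic.natDegree_eq_zero.mp hdeg, ← C_1, discr_C]
    exact isUnit_one
  · obtain ⟨k, hk⟩ := Nat.exists_eq_add_of_le (natDegree_derivative_le f)
    have hres : IsUnit (resultant f (derivative f) f.natDegree (f.natDegree - 1)) := by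
      rw [hk, resultant_add_right_deg _ _ _ _ k le_rfl, hmonic.coeff_natDegree, one_pow, one_mul]
      exact (isUnit_resultant_iff_isCoprime hmonic).mpr hf
    rw [resultant_deriv (natDegree_pos_iff_degree_pos.mp hdeg)] at hres
    exact isUnit_of_mul_isUnit_right hres

end Separable

theorem splits_int_of_separable {f : ℤ[X]} (hmonic : f.Monic) (hf : f.Separable) : f.Splits := by
  refine (IsAlgClosed.splits (f.map (algebraMap ℤ ℂ))).of_splits_map_of_injective
    (algebraMap ℤ ℂ).injective_int fun z hz ↦ ?_
  have hroot : aeval z f = 0 := by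
    rw [← eval_map_algebraMap]
    exact isRoot_of_mem_roots hz
  have hint : IsIntegral ℤ z := ⟨f, hmonic, hroot⟩
  have : Module.Finite ℤ (adjoin ℤ {z}) := finite_adjoin_simple_of_isIntegral hint
  have : FormallyUnramified ℤ (adjoin ℤ {z}) := formallyUnramified_adjoin_of_separable hf hroot
  have : Unramified ℤ (adjoin ℤ {z}) := {}
  have hsurj := (bijective_algebraMap_int_of_finite_of_unramified (𝒪 := adjoin ℤ {z})).surjective
  obtain ⟨r, hr⟩ := hsurj ⟨z, self_mem_adjoin_singleton ℤ z⟩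
  exact ⟨r, congrArg Subtype.val hr⟩

theorem natDegree_le_card_of_splits_of_separable {R : Type*} [CommRing R] [IsDomain R] [Fintype R]
    {f : R[X]} (hsplits : f.Splits) (hf : f.Separable) : f.natDegree ≤ Fintype.card R := by
  classical
  rw [hsplits.natDegree_eq_card_roots, ← Multiset.toFinset_card_of_nodup (nodup_roots hf)]
  exact Finset.card_le_univ _

theorem natDegree_int_le_two_of_separable {f : ℤ[X]} (hmonic : f.Monic) (hf : f.Separable) :
    f.natDegree ≤ 2 := by
  have hsplits := splits_int_of_separable hmonic hf
  rw [← hmonic.natDegree_map (Int.castRingHom (ZMod 2))]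
  exact natDegree_le_card_of_splits_of_separable (hsplits.map _) hf.map

theorem discr_eq_of_monic_of_natDegree_eq_two {R : Type*} [CommRing R] {f : R[X]}
    (hmonic : f.Monic) (hdeg : f.natDegree = 2) : f.discr = f.coeff 1 ^ 2 - 4 * f.coeff 0 := by
  have hlead : f.coeff 2 = 1 := hdeg ▸ hmonic.coeff_natDegree
  rw [discr_of_degree_eq_two ((degree_eq_iff_natDegree_eq_of_pos two_pos).mpr hdeg), hlead, mul_one]

theorem discr_ne_neg_one_of_natDegree_eq_two {R : Type*} [CommRing R] (φ : R →+* ZMod 4)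
    {f : R[X]} (hdeg : f.natDegree = 2) : f.discr ≠ -1 := by
  intro hdiscr
  rw [discr_of_degree_eq_two ((degree_eq_iff_natDegree_eq_of_pos two_pos).mpr hdeg)] at hdiscr
  have hsq : φ (f.coeff 1) ^ 2 = -1 := by
    have h := congrArg φ hdiscr
    rw [map_sub, map_mul, map_mul, map_ofNat, map_pow, map_neg, map_one,
      show (4 : ZMod 4) = 0 from rfl, zero_mul, zero_mul, sub_zero] at h
    exact h
  have hne : ∀ b : ZMod 4, b ^ 2 ≠ -1 := by decide
  exact hne _ hsq

theorem not_isSquare_discr_minpoly {R S : Type*} [CommRing R] [IsDomain R] [IsIntegrallyClosed R]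
    [CommRing S] [IsDomain S] [Algebra R S] [Module.IsTorsionFree R S] (h2 : (2 : R) ≠ 0) {μ : S}
    (hμ : IsIntegral R μ) (hdeg : (minpoly R μ).natDegree = 2) :
    ¬IsSquare (minpoly R μ).discr := by
  rintro ⟨r, hr⟩
  set f := minpoly R μ
  rw [discr_eq_of_monic_of_natDegree_eq_two (minpoly.monic hμ) hdeg] at hr
  have hroot : algebraMap R S (f.coeff 0) + algebraMap R S (f.coeff 1) * μ + μ ^ 2 = 0 := by
    have hlead : f.coeff 2 = 1 := hdeg ▸ (minpoly.monic hμ).coeff_natDegree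
    have h : aeval μ f = 0 := minpoly.aeval R μ
    simpa [aeval_eq_sum_range, hdeg, Finset.sum_range_succ, hlead, Algebra.smul_def] using h
  have hmul : (2 * μ + algebraMap R S (f.coeff 1 - r)) *
      (2 * μ + algebraMap R S (f.coeff 1 + r)) = 0 := by
    have hr' := congrArg (algebraMap R S) hr
    simp only [map_sub, map_add, map_mul, map_pow, map_ofNat] at hr' ⊢
    linear_combination 4 * hroot + hr'
  have hlin (s : R) : 2 * μ + algebraMap R S s ≠ 0 := by
    intro hs
    have hdeg_lin : (C 2 * X + C s).natDegree = 1 := natDegree_linear h2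
    have hle : f.degree ≤ (C 2 * X + C s).degree :=
      minpoly.IsIntegrallyClosed.degree_le_of_ne_zero
        (ne_zero_of_natDegree_gt (hdeg_lin ▸ one_pos)) (by simpa [map_ofNat] using hs)
    have := natDegree_le_natDegree hle
    lia
  exact mul_ne_zero (hlin _) (hlin _) hmul

theorem mem_range_algebraMap_of_formallyUnramified_adjoin {R S : Type*} [CommRing R] [IsDomain R]
    [IsIntegrallyClosed R] [CommRing S] [IsDomain S] [Algebra R S] [Module.IsTorsionFree R S]
    (φ : R →+* ℤ) (hR : ∀ u : R, IsUnit u → u = 1 ∨ u = -1) {μ : S} (hμ : IsIntegral R μ)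
    (hunram : FormallyUnramified R (adjoin R {μ})) : μ ∈ (algebraMap R S).range := by
  have hmonic := minpoly.monic hμ
  have : FormallyUnramified R (AdjoinRoot (minpoly R μ)) :=
    .of_equiv (minpoly.equivAdjoin hμ).symm
  have hsep : (minpoly R μ).Separable := separable_of_formallyUnramified_adjoinRoot
  have hle : (minpoly R μ).natDegree ≤ 2 := by
    rw [← hmonic.natDegree_map φ]
    exact natDegree_int_le_two_of_separable (hmonic.map φ) hsep.map
  have hne : (minpoly R μ).natDegree ≠ 2 := by
    intro hdeg
    have h2 : (2 : R) ≠ 0 := ne_zero_of_map (f := φ) (by rw [map_ofNat]; exact two_ne_zero)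
    refine not_isSquare_discr_minpoly h2 hμ hdeg ?_
    rcases hR _ (isUnit_discr_of_separable hmonic hsep) with h | h
    · exact h ▸ IsSquare.one
    · exact absurd h (discr_ne_neg_one_of_natDegree_eq_two ((Int.castRingHom (ZMod 4)).comp φ) hdeg)
  have hpos := minpoly.natDegree_pos hμ
  exact minpoly.natDegree_eq_one_iff.mp (by lia)

theorem finrank_eq_one_of_adjoin_eq_top {F K : Type*} [Field F] [Field K] [Algebra F K] {μ : K}
    (hK : adjoin F {μ} = ⊤) (hμ : μ ∈ (algebraMap F K).range) : Module.finrank F K = 1 := by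
  rw [← Subalgebra.bot_eq_top_iff_finrank_eq_one, ← hK, eq_comm, eq_bot_iff,
    adjoin_le_iff, Set.singleton_subset_iff]
  exact hμ

theorem mvPolynomial_int_eq_one_or_eq_neg_one_of_isUnit {σ : Type*} (u : MvPolynomial σ ℤ)
    (hu : IsUnit u) : u = 1 ∨ u = -1 := by
  obtain ⟨r, hr, rfl⟩ := MvPolynomial.isUnit_iff_eq_C_of_isReduced.mp hu
  rcases Int.isUnit_iff.mp hr with rfl | rfl <;> simp

theorem stmt16_general {R F K : Type*} [CommRing R] [IsDomain R] [IsIntegrallyClosed R]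
    (φ : R →+* ℤ) (hR : ∀ u : R, IsUnit u → u = 1 ∨ u = -1)
    [Field F] [Algebra R F] [FaithfulSMul R F] [Field K] [Algebra F K] [Algebra R K]
    [IsScalarTower R F K] {μ : K} (hK : adjoin F {μ} = ⊤) (hμ : IsIntegral R μ)
    (hunram : FormallyUnramified R (adjoin R {μ})) :
    (∃ r : R, algebraMap R K r = μ) ∧ Module.finrank F K = 1 := by
  have : FaithfulSMul R K := FaithfulSMul.trans R F K
  obtain ⟨r, hr⟩ := mem_range_algebraMap_of_formallyUnramified_adjoin φ hR hμ hunram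
  refine ⟨⟨r, hr⟩, finrank_eq_one_of_adjoin_eq_top hK ⟨algebraMap R F r, ?_⟩⟩
  rw [← IsScalarTower.algebraMap_apply, hr]

end

open MvPolynomial in
/-- Let `K = ℚ(t₁,…,tₙ)(μ)` be a finite extension of `ℚ(t₁,…,tₙ)` whose ring
of integers (the integral closure of `ℤ[t₁,…,tₙ]` in `K`) is
`ℤ[t₁,…,tₙ][μ]`.  If `Spec O_K → Spec ℤ[t₁,…,tₙ]` is unramified (the Kähler
differentials vanish) and `ℚ` has no nontrivial everywhere-unramified
extension, then `μ ∈ ℤ[t₁,…,tₙ]` and hence `K = ℚ(t₁,…,tₙ)`. -/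
theorem stmt16 (n : ℕ) (K : Type*) [Field K]
    [Algebra (FractionRing (MvPolynomial (Fin n) ℤ)) K]
    [FiniteDimensional (FractionRing (MvPolynomial (Fin n) ℤ)) K]
    [Algebra (MvPolynomial (Fin n) ℤ) K]
    [IsScalarTower (MvPolynomial (Fin n) ℤ)
      (FractionRing (MvPolynomial (Fin n) ℤ)) K]
    (μ : K)
    (hK : Algebra.adjoin (FractionRing (MvPolynomial (Fin n) ℤ)) ({μ} : Set K) = ⊤)
    (hOK : integralClosure (MvPolynomial (Fin n) ℤ) K
      = Algebra.adjoin (MvPolynomial (Fin n) ℤ) ({μ} : Set K))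
    (hunram : Subsingleton
      (Ω[(integralClosure (MvPolynomial (Fin n) ℤ) K)⁄(MvPolynomial (Fin n) ℤ)]))
    (hHM : ∀ (L : Type) [Field L] [NumberField L],
      (∀ p : ℕ, p.Prime →
        Squarefree (Ideal.span {(p : NumberField.RingOfIntegers L)} :
          Ideal (NumberField.RingOfIntegers L))) →
      Module.finrank ℚ L = 1) :
    (∃ r : MvPolynomial (Fin n) ℤ,
        algebraMap (MvPolynomial (Fin n) ℤ) K r = μ)
      ∧ Module.finrank (FractionRing (MvPolynomial (Fin n) ℤ)) K = 1 := by
  have : Algebra.FormallyUnramified _ (integralClosure (MvPolynomial (Fin n) ℤ) K) := ⟨hunram⟩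
  exact stmt16_general constantCoeff mvPolynomial_int_eq_one_or_eq_neg_one_of_isUnit hK
    (hOK.ge (Algebra.self_mem_adjoin_singleton _ μ)) (.of_equiv (Subalgebra.equivOfEq _ _ hOK))
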